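/- The derivative of D is strictly positive at every real R; consequently D is strictly increasing on the real line. -/

import Mathlib

/-!
Let `ierfc x = 2 / √π * ∫ t in Ioi x, (t - x) * exp (-t²)`, a positive function. Integrating
explicitly, `ierfc x = exp (-x²) / √π - x * erfc x`, so `ierfc' = -erfc` and, with `A = ierfc (-R)`,
`D R = erfc (-R) + 2 * R * A - A²`. Differentiating this and using the reflection formula
`erfc (-R) = 2 - erfc R` gives `D' R = 2 * ierfc (-R) * erfc R`, a product of positive factors.
-/

open MeasureTheory Filter

/-- The complementary error function. -/
noncomputable def erfc (x : ℝ) : ℝ :=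
  2 / Real.sqrt Real.pi * ∫ t in Set.Ioi x, Real.exp (-t ^ 2)

/-- The denominator of the explosion-rate bound. -/
noncomputable def D (R : ℝ) : ℝ :=
  (1 + 2 * R ^ 2) * erfc (-R) + 2 * R * Real.exp (-R ^ 2) / Real.sqrt Real.pi -
    (R * erfc (-R) + Real.exp (-R ^ 2) / Real.sqrt Real.pi) ^ 2

/-- The explosion-rate bound. -/
noncomputable def C (R : ℝ) : ℝ := erfc (-R) / D R

open Set
open scoped Real Topology

lemma setIntegral_pos_of_forall_mem_pos {α : Type*} [MeasurableSpace α] {μ : Measure α} {s : Set α}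
    {f : α → ℝ} (hs : MeasurableSet s) (hμs : 0 < μ s) (hf : IntegrableOn f s μ)
    (hpos : ∀ x ∈ s, 0 < f x) : 0 < ∫ x in s, f x ∂μ := by
  have hnonneg : 0 ≤ᵐ[μ.restrict s] f := ae_restrict_of_forall_mem hs fun x hx => (hpos x hx).le
  have hsupport : Function.support f ∩ s = s := inter_eq_right.2 fun x hx => (hpos x hx).ne'
  rwa [setIntegral_pos_iff_support_of_nonneg_ae hnonneg hf, hsupport]

lemma hasDerivAt_integral_Ioi {E : Type*} [NormedAddCommGroup E] [NormedSpace ℝ E]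
    [CompleteSpace E] {f : ℝ → E} {a x : ℝ} (hf : IntegrableOn f (Ioi a)) (hax : a < x)
    (hfx : ContinuousAt f x) : HasDerivAt (fun y => ∫ t in Ioi y, f t) (-f x) x := by
  have hint : IntervalIntegrable f volume a x :=
    (intervalIntegrable_iff_integrableOn_Ioc_of_le hax.le).2 (hf.mono_set Ioc_subset_Ioi_self)
  have hmeas : StronglyMeasurableAtFilter f (𝓝 x) :=
    ⟨Ioi a, Ioi_mem_nhds hax, hf.aestronglyMeasurable⟩
  have hsplit : (fun y => ∫ t in Ioi y, f t) =ᶠ[𝓝 x]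
      fun y => (∫ t in Ioi a, f t) - ∫ t in a..y, f t := by
    filter_upwards [Ioi_mem_nhds hax] with y hy
    rw [← intervalIntegral.integral_Ioi_sub_Ioi hf (mem_Ioi.1 hy).le, sub_sub_cancel]
  exact ((intervalIntegral.integral_hasDerivAt_right hint hmeas hfx).const_sub
    (∫ t in Ioi a, f t)).congr_of_eventuallyEq hsplit

lemma hasDerivAt_exp_neg_mul_sq (b x : ℝ) :
    HasDerivAt (fun t : ℝ => Real.exp (-b * t ^ 2)) (-(2 * b * x) * Real.exp (-b * x ^ 2)) x :=
  ((hasDerivAt_pow 2 x).const_mul (-b)).exp.congr_deriv (by push_cast; ring)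

lemma tendsto_exp_neg_mul_sq_atTop {b : ℝ} (hb : 0 < b) :
    Tendsto (fun t : ℝ => Real.exp (-b * t ^ 2)) atTop (𝓝 0) :=
  Real.tendsto_exp_atBot.comp <|
    (tendsto_pow_atTop two_ne_zero).const_mul_atTop_of_neg (neg_neg_of_pos hb)

lemma integral_Ioi_mul_exp_neg_mul_sq {b : ℝ} (hb : 0 < b) (x : ℝ) :
    ∫ t in Ioi x, t * Real.exp (-b * t ^ 2) = Real.exp (-b * x ^ 2) / (2 * b) := by
  have hderiv (t : ℝ) : HasDerivAt (fun t => Real.exp (-b * t ^ 2) / -(2 * b))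
      (t * Real.exp (-b * t ^ 2)) t :=
    ((hasDerivAt_exp_neg_mul_sq b t).div_const _).congr_deriv (by field_simp)
  have hlim : Tendsto (fun t => Real.exp (-b * t ^ 2) / -(2 * b)) atTop (𝓝 0) := by
    simpa only [zero_div] using (tendsto_exp_neg_mul_sq_atTop hb).div_const (-(2 * b))
  rw [integral_Ioi_of_hasDerivAt_of_tendsto' (fun t _ => hderiv t)
    (integrable_mul_exp_neg_mul_sq hb).integrableOn hlim, div_neg, zero_sub, neg_neg]

lemma integrable_exp_neg_sq : Integrable fun t : ℝ => Real.exp (-t ^ 2) := by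
  simpa using integrable_exp_neg_mul_sq one_pos

lemma integrable_mul_exp_neg_sq : Integrable fun t : ℝ => t * Real.exp (-t ^ 2) := by
  simpa using integrable_mul_exp_neg_mul_sq one_pos

lemma hasDerivAt_exp_neg_sq (x : ℝ) :
    HasDerivAt (fun t : ℝ => Real.exp (-t ^ 2)) (-(2 * x) * Real.exp (-x ^ 2)) x := by
  simpa using hasDerivAt_exp_neg_mul_sq 1 x

lemma erfc_pos (x : ℝ) : 0 < erfc x :=
  mul_pos (by positivity) <| setIntegral_pos_of_forall_mem_pos measurableSet_Ioi (by simp)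
    integrable_exp_neg_sq.integrableOn fun _ _ => Real.exp_pos _

lemma erfc_neg (x : ℝ) : erfc (-x) = 2 - erfc x := by
  have hreflect : ∫ t in Ioi (-x), Real.exp (-t ^ 2) = ∫ t in Iic x, Real.exp (-t ^ 2) := by
    simp [← integral_comp_neg_Iic]
  have htotal : ∫ t : ℝ, Real.exp (-t ^ 2) = √π := by simpa using integral_gaussian 1
  have hadd : (∫ t in Iic x, Real.exp (-t ^ 2)) + ∫ t in Ioi x, Real.exp (-t ^ 2) = √π := by
    rw [intervalIntegral.integral_Iic_add_Ioi integrable_exp_neg_sq.integrableOn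
      integrable_exp_neg_sq.integrableOn, htotal]
  rw [erfc, erfc, hreflect, eq_sub_iff_add_eq, ← mul_add, hadd,
    div_mul_cancel₀ _ (Real.sqrt_pos.2 Real.pi_pos).ne']

lemma hasDerivAt_erfc (x : ℝ) : HasDerivAt erfc (-(2 / √π * Real.exp (-x ^ 2))) x :=
  ((hasDerivAt_integral_Ioi integrable_exp_neg_sq.integrableOn (sub_one_lt x)
    (by fun_prop)).const_mul (2 / √π)).congr_deriv (mul_neg _ _)

/-- The integrated complementary error function `∫ s in (x, ∞), erfc s`, written as the single
integral that results from exchanging the order of integration; its sign is then visible. -/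
noncomputable def ierfc (x : ℝ) : ℝ :=
  2 / √π * ∫ t in Ioi x, (t - x) * Real.exp (-t ^ 2)

lemma integrable_sub_mul_exp_neg_sq (x : ℝ) :
    Integrable fun t : ℝ => (t - x) * Real.exp (-t ^ 2) := by
  simp only [sub_mul]
  exact integrable_mul_exp_neg_sq.sub (integrable_exp_neg_sq.const_mul x)

lemma ierfc_pos (x : ℝ) : 0 < ierfc x :=
  mul_pos (by positivity) <| setIntegral_pos_of_forall_mem_pos measurableSet_Ioi (by simp)
    (integrable_sub_mul_exp_neg_sq x).integrableOn fun _ ht =>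
      mul_pos (sub_pos.2 ht) (Real.exp_pos _)

lemma ierfc_eq_exp_sub_mul_erfc (x : ℝ) : ierfc x = Real.exp (-x ^ 2) / √π - x * erfc x := by
  have hmoment : ∫ t in Ioi x, t * Real.exp (-t ^ 2) = Real.exp (-x ^ 2) / 2 := by
    simpa using integral_Ioi_mul_exp_neg_mul_sq one_pos x
  simp only [ierfc, erfc, sub_mul]
  rw [integral_sub integrable_mul_exp_neg_sq.integrableOn
    (integrable_exp_neg_sq.const_mul x).integrableOn, integral_const_mul, hmoment]
  ring

lemma hasDerivAt_ierfc (x : ℝ) : HasDerivAt ierfc (-erfc x) x := by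
  rw [funext ierfc_eq_exp_sub_mul_erfc]
  exact (((hasDerivAt_exp_neg_sq x).div_const √π).sub
    ((hasDerivAt_id' x).mul (hasDerivAt_erfc x))).congr_deriv (by ring)

lemma D_eq_erfc_add_ierfc (R : ℝ) : D R = erfc (-R) + 2 * R * ierfc (-R) - ierfc (-R) ^ 2 := by
  rw [D, ierfc_eq_exp_sub_mul_erfc, neg_sq]
  ring

lemma hasDerivAt_D (R : ℝ) : HasDerivAt D (2 * ierfc (-R) * erfc R) R := by
  have herfc : HasDerivAt (fun y => erfc (-y)) (2 / √π * Real.exp (-R ^ 2)) R :=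
    ((hasDerivAt_erfc (-R)).comp R (hasDerivAt_neg R)).congr_deriv (by simp)
  have hierfc : HasDerivAt (fun y => ierfc (-y)) (erfc (-R)) R :=
    ((hasDerivAt_ierfc (-R)).comp R (hasDerivAt_neg R)).congr_deriv (by simp)
  have hexp : 2 / √π * Real.exp (-R ^ 2) = 2 * (ierfc (-R) - R * erfc (-R)) := by
    rw [ierfc_eq_exp_sub_mul_erfc, neg_sq]
    ring
  rw [funext D_eq_erfc_add_ierfc]
  refine ((herfc.add (((hasDerivAt_id' R).const_mul 2).mul hierfc)).sub
    (hierfc.pow 2)).congr_deriv ?_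
  rw [hexp, erfc_neg]
  push_cast
  ring

theorem D_deriv_pos_and_strictMono : (∀ R : ℝ, 0 < deriv D R) ∧ StrictMono D := by
  have hpos (R : ℝ) : 0 < deriv D R := by
    rw [(hasDerivAt_D R).deriv]
    exact mul_pos (mul_pos two_pos (ierfc_pos (-R))) (erfc_pos R)
  exact ⟨hpos, strictMono_of_deriv_pos hpos⟩
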